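/- Let (G, μ) be a weighted graph, let p ∈ [1, ∞), and let k be an integer with 1 ≤ k ≤ #V − 1. Let A_0, A_1, …, A_k be nonempty pairwise disjoint subsets of V, and set D := min_{α ≠ β} d(A_α, A_β), where d is the graph distance. Then ν̂_{k,p}(G, μ)^{1/p} ≤ (2 / D) · max_{α = 0, …, k} log( e · (μ(V) − ∑_{β ≠ α} μ(A_β)) / μ(A_α) ). -/

import Mathlib

open scoped BigOperators Classical

noncomputable section

/-- A weighted graph: a simple connected finite graph together with a symmetric
nonnegative weight which is positive exactly on edges. -/
structure WeightedGraph (V : Type*) [Fintype V] where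
  G : SimpleGraph V
  connected : G.Connected
  w : V → V → ℝ
  symm : ∀ x y, w x y = w y x
  nonneg : ∀ x y, 0 ≤ w x y
  pos_iff_adj : ∀ x y, 0 < w x y ↔ G.Adj x y

namespace WeightedGraph

variable {V : Type*} [Fintype V]

/-- The weight `μ(x)` of a vertex. -/
def vwt (W : WeightedGraph V) (x : V) : ℝ := ∑ y, W.w x y

/-- The weight `μ(A)` of a set of vertices. -/
def swt (W : WeightedGraph V) (A : Set V) : ℝ :=
  ∑ x ∈ Finset.univ.filter (· ∈ A), W.vwt x

/-- The weighted mean of a function. -/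
def mean (W : WeightedGraph V) (φ : V → ℝ) : ℝ :=
  (∑ x, φ x * W.vwt x) / W.swt Set.univ

/-- The `p`-energy of a function. -/
def energy (W : WeightedGraph V) (p : ℝ) (φ : V → ℝ) : ℝ :=
  ∑ x, ∑ y, |φ y - φ x| ^ p * W.w x y

/-- The `k`-th discrete `p`-Poincaré constant. -/
def nu (W : WeightedGraph V) (k : ℕ) (p : ℝ) : ℝ :=
  sInf {s | ∃ L : Submodule ℝ (V → ℝ), Module.finrank ℝ L = k ∧
    (∀ φ ∈ L, (∃ c : ℝ, ∀ x, φ x = c) → φ = 0) ∧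
    s = sSup {r | ∃ φ ∈ L, φ ≠ 0 ∧
      r = W.energy p φ / (2 * ∑ x, |φ x - W.mean φ| ^ p * W.vwt x)}}

/-- The `k`-th discrete modified `p`-Poincaré constant. -/
def nuHat (W : WeightedGraph V) (k : ℕ) (p : ℝ) : ℝ :=
  sInf {s | ∃ L : Submodule ℝ (V → ℝ), Module.finrank ℝ L = k + 1 ∧
    s = sSup {r | ∃ φ ∈ L, φ ≠ 0 ∧
      r = W.energy p φ / (2 * ∑ x, |φ x| ^ p * W.vwt x)}}

/-- The vertex boundary of a set of vertices. -/
def vbdry (W : WeightedGraph V) (Ω : Set V) : Set V :=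
  {x ∈ Ω | ∃ y ∉ Ω, 0 < W.w x y}

/-- The `k`-th discrete Dirichlet `p`-Poincaré constant of `Ω`; functions on `Ω`
vanishing on the vertex boundary are modelled as functions on `V` vanishing
outside `Ω \ ∂ᵥΩ`. -/
def nuD (W : WeightedGraph V) (Ω : Set V) (k : ℕ) (p : ℝ) : ℝ :=
  sInf {s | ∃ L : Submodule ℝ (V → ℝ), Module.finrank ℝ L = k ∧
    (∀ φ ∈ L, ∀ x, x ∉ Ω \ W.vbdry Ω → φ x = 0) ∧
    s = sSup {r | ∃ φ ∈ L, φ ≠ 0 ∧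
      r = (∑ x ∈ Finset.univ.filter (· ∈ Ω), ∑ y ∈ Finset.univ.filter (· ∈ Ω),
            |φ y - φ x| ^ p * W.w x y) /
          (2 * ∑ x ∈ Finset.univ.filter (· ∈ Ω), |φ x| ^ p * W.vwt x)}}

/-- The closed `r`-neighborhood of a set of vertices w.r.t. the graph distance. -/
def ball (W : WeightedGraph V) (A : Set V) (r : ℝ) : Set V :=
  {x | ∃ a ∈ A, (W.G.dist x a : ℝ) ≤ r}

/-- The graph distance between two sets of vertices. -/
def setDist (W : WeightedGraph V) (A B : Set V) : ℕ :=
  sInf {n : ℕ | ∃ a ∈ A, ∃ b ∈ B, W.G.dist a b = n}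

end WeightedGraph

/-!
Let `M` be the maximum of the logarithms. Around each `A α` put the test function
`ψ (a * d(x, A α))` with `a = 2 M / D`, where `ψ s = exp (-s)` up to `s = M - 1`, continues along
its tangent line and vanishes from `s = M` on; the supports are then the disjoint open
`D / 2`-balls. The slope of `ψ` has absolute value `ψ` on the exponential part and `exp (-(M - 1))`
on the linear one, and the choice of `M` makes the contribution of the latter at most `μ (A α)`,
hence at most the `p`-th power of the `p`-norm of the test function itself. Thus the Rayleigh
quotients are at most `a ^ p` on the `(k + 1)`-dimensional span of the test functions.
-/

lemma exp_neg_sub_exp_neg_le {u v : ℝ} (huv : u ≤ v) :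
    Real.exp (-u) - Real.exp (-v) ≤ (v - u) * ((Real.exp (-u) + Real.exp (-v)) / 2) := by
  have hexp : 1 ≤ Real.exp (v - u) := Real.one_le_exp (sub_nonneg.2 huv)
  have hlog := Real.le_log_one_add_of_nonneg (sub_nonneg.2 hexp)
  rw [add_sub_cancel, Real.log_exp, div_le_iff₀ (by linarith)] at hlog
  have hu : Real.exp (-u) = Real.exp (v - u) * Real.exp (-v) := by
    rw [← Real.exp_add]; ring_nf
  rw [hu]
  linear_combination (Real.exp (-v) / 2) * hlog

/-- The radial profile of the test functions: the function `exp (-s)` on `(-∞, S]`, continued along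
its tangent line at `S` down to its zero `S + 1`, and by `0` from there on. -/
def truncExp (S s : ℝ) : ℝ := Real.exp (-min s S) * max 0 (1 - max 0 (s - S))

/-- The absolute value of the slope of `truncExp S`. At the kink `S + 1` the left slope is taken, so
that the trapezoidal bound `truncExp_sub_le` holds up to `S + 1`. -/
def truncExpSlope (S s : ℝ) : ℝ := if s ≤ S + 1 then Real.exp (-min s S) else 0

section TruncExp

variable {S s u v p : ℝ}

lemma truncExp_nonneg (S s : ℝ) : 0 ≤ truncExp S s :=
  mul_nonneg (Real.exp_nonneg _) (le_max_left _ _)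

lemma truncExpSlope_nonneg (S s : ℝ) : 0 ≤ truncExpSlope S s := by
  unfold truncExpSlope
  split_ifs
  · exact Real.exp_nonneg _
  · exact le_rfl

lemma truncExp_of_le (hs : s ≤ S) : truncExp S s = Real.exp (-s) := by
  rw [truncExp, min_eq_left hs, max_eq_left (sub_nonpos.2 hs), sub_zero,
    max_eq_right zero_le_one, mul_one]

lemma truncExp_of_mem_Icc (hs : s ∈ Set.Icc S (S + 1)) :
    truncExp S s = Real.exp (-S) * (1 - (s - S)) := by
  rw [truncExp, min_eq_right hs.1, max_eq_right (sub_nonneg.2 hs.1),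
    max_eq_right (by linarith [hs.2])]

lemma truncExp_eq_zero (hs : S + 1 ≤ s) : truncExp S s = 0 := by
  rw [truncExp, max_eq_right (a := 0) (b := s - S) (by linarith), max_eq_left (by linarith),
    mul_zero]

lemma truncExp_zero (hS : 0 ≤ S) : truncExp S 0 = 1 := by
  rw [truncExp_of_le hS, neg_zero, Real.exp_zero]

lemma antitone_truncExp (S : ℝ) : Antitone (truncExp S) := by
  intro u v huv
  unfold truncExp
  gcongr

lemma truncExp_sub_le (huv : u ≤ v) (hv : v ≤ S + 1) :
    truncExp S u - truncExp S v ≤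
      (v - u) * ((truncExpSlope S u + truncExpSlope S v) / 2) := by
  rw [truncExpSlope, truncExpSlope, if_pos hv, if_pos (huv.trans hv)]
  rcases le_total v S with hvS | hSv
  · rw [truncExp_of_le hvS, truncExp_of_le (huv.trans hvS), min_eq_left hvS,
      min_eq_left (huv.trans hvS)]
    exact exp_neg_sub_exp_neg_le huv
  rw [truncExp_of_mem_Icc ⟨hSv, hv⟩, min_eq_right hSv]
  rcases le_total u S with huS | hSu
  · rw [truncExp_of_le huS, min_eq_left huS]
    have hexp : Real.exp (-S) ≤ Real.exp (-u) := by gcongr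
    have hlin : 0 ≤ (v - S) * (Real.exp (-u) - Real.exp (-S)) :=
      mul_nonneg (sub_nonneg.2 hSv) (sub_nonneg.2 hexp)
    linarith [exp_neg_sub_exp_neg_le huS]
  · rw [truncExp_of_mem_Icc ⟨hSu, huv.trans hv⟩, min_eq_right hSu]
    exact le_of_eq (by ring)

lemma truncExp_le_mul_truncExpSlope {r : ℝ} (hr : 0 ≤ r) (hs : S + 1 ≤ s + r) :
    truncExp S s ≤ r * truncExpSlope S s := by
  rcases le_total (S + 1) s with h | h
  · rw [truncExp_eq_zero h]
    exact mul_nonneg hr (truncExpSlope_nonneg S s)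
  · rw [truncExp, truncExpSlope, if_pos h, mul_comm]
    gcongr
    exact max_le hr (by linarith [le_max_right 0 (s - S)])

lemma truncExpSlope_rpow_le (hp : p ≠ 0) (S s : ℝ) :
    truncExpSlope S s ^ p ≤
      truncExp S s ^ p + if s ≤ S + 1 then Real.exp (-S) ^ p else 0 := by
  have hnonneg : 0 ≤ truncExp S s ^ p := Real.rpow_nonneg (truncExp_nonneg S s) p
  unfold truncExpSlope
  split_ifs with h
  · rcases le_total s S with hs | hs
    · rw [truncExp_of_le hs, min_eq_left hs]
      exact le_add_of_nonneg_right (by positivity)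
    · rw [min_eq_right hs]
      exact le_add_of_nonneg_left hnonneg
  · rwa [Real.zero_rpow hp, add_zero]

/- Since `S + 1` is a half-integral multiple of the step `a`, a step across the kink starts at
distance at most `a / 2` from it, which compensates for the vanishing slope at its end point. -/
lemma abs_truncExp_sub_le {a : ℝ} {D i j : ℕ} (ha : 0 < a) (hS : S + 1 = a * (D / 2))
    (hij : i ≤ j + 1) (hji : j ≤ i + 1) :
    |truncExp S (a * j) - truncExp S (a * i)| ≤
      (a * truncExpSlope S (a * i) + a * truncExpSlope S (a * j)) / 2 := by
  wlog hle : i ≤ j generalizing i j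
  · rw [abs_sub_comm, add_comm (a * _)]
    exact this hji hij (le_of_not_ge hle)
  have hmul : a * (i : ℝ) ≤ a * j := by gcongr
  rw [abs_sub_comm, abs_of_nonneg (sub_nonneg.2 (antitone_truncExp S hmul))]
  have hslope_i := truncExpSlope_nonneg S (a * i)
  have hslope_j := truncExpSlope_nonneg S (a * j)
  rcases le_or_gt (a * (j : ℝ)) (S + 1) with hj | hj
  · have hstep : a * (j : ℝ) - a * i ≤ a := by
      have : (j : ℝ) ≤ i + 1 := mod_cast hji
      nlinarith
    calc truncExp S (a * i) - truncExp S (a * j)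
        ≤ (a * j - a * i) * ((truncExpSlope S (a * i) + truncExpSlope S (a * j)) / 2) :=
          truncExp_sub_le hmul hj
      _ ≤ a * ((truncExpSlope S (a * i) + truncExpSlope S (a * j)) / 2) := by gcongr
      _ = _ := by ring
  · have hDj : D < 2 * j := by
      have : (D / 2 : ℝ) < j := lt_of_mul_lt_mul_left (hS ▸ hj) ha.le
      have : (D : ℝ) < 2 * j := by linarith
      exact_mod_cast this
    have hDi : (D : ℝ) ≤ 2 * i + 1 := mod_cast (by omega : D ≤ 2 * i + 1)
    have hhalf := truncExp_le_mul_truncExpSlope (S := S) (s := a * i) (half_pos ha).le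
      (by rw [hS]; nlinarith)
    rw [truncExp_eq_zero hj.le]
    linarith [mul_nonneg ha.le hslope_j]

end TruncExp

lemma iSup_rpow_le_sum_rpow {ι : Type*} [Fintype ι] [Nonempty ι] (p : ℝ) {f : ι → ℝ}
    (hf : ∀ α, 0 ≤ f α) :
    (⨆ α, f α) ^ p ≤ ∑ α, f α ^ p := by
  obtain ⟨α, hα⟩ := exists_eq_ciSup_of_finite (f := f)
  rw [← hα]
  exact Finset.single_le_sum (f := fun α => f α ^ p) (fun β _ => Real.rpow_nonneg (hf β) p)
    (Finset.mem_univ α)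

section DisjointSupport

variable {ι X R : Type*}

lemma exists_forall_ne_eq_zero_of_disjoint_support [Nonempty ι] [Zero R] {h : ι → X → R}
    (hh : Pairwise fun α β => Disjoint (h α).support (h β).support) (x : X) :
    ∃ α, ∀ β, β ≠ α → h β x = 0 := by
  by_cases hx : ∃ α, h α x ≠ 0
  · obtain ⟨α, hα⟩ := hx
    exact ⟨α, fun β hβ => by_contra fun hβx => Set.disjoint_left.1 (hh hβ) hβx hα⟩
  · push Not at hx
    exact ⟨Classical.arbitrary ι, fun β _ => hx β⟩

lemma sum_smul_apply_of_forall_ne_eq_zero [Semiring R] {h : ι → X → R} (c : ι → R)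
    {s : Finset ι} {α : ι} {x : X} (hαs : α ∈ s) (hα : ∀ β, β ≠ α → h β x = 0) :
    (∑ β ∈ s, c β • h β) x = c α * h α x := by
  simp only [Finset.sum_apply, Pi.smul_apply, smul_eq_mul]
  exact Finset.sum_eq_single_of_mem α hαs fun β _ hβ => by rw [hα β hβ, mul_zero]

lemma abs_sum_smul_apply_rpow [Fintype ι] {h : ι → X → ℝ}
    (hh : Pairwise fun α β => Disjoint (h α).support (h β).support)
    {p : ℝ} (hp : p ≠ 0) (c : ι → ℝ) (x : X) :
    |(∑ α, c α • h α) x| ^ p = ∑ α, |c α| ^ p * |h α x| ^ p := by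
  rcases isEmpty_or_nonempty ι with hι | hι
  · simp [hp]
  obtain ⟨α, hα⟩ := exists_forall_ne_eq_zero_of_disjoint_support hh x
  rw [sum_smul_apply_of_forall_ne_eq_zero c (Finset.mem_univ α) hα,
    Finset.sum_eq_single_of_mem α (Finset.mem_univ α) fun β _ hβ => by
      rw [hα β hβ, abs_zero, Real.zero_rpow hp, mul_zero],
    abs_mul, Real.mul_rpow (abs_nonneg _) (abs_nonneg _)]

lemma linearIndependent_of_disjoint_support [Ring R] [NoZeroDivisors R] {h : ι → X → R}
    (hh : Pairwise fun α β => Disjoint (h α).support (h β).support) (hne : ∀ α, h α ≠ 0) :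
    LinearIndependent R h := by
  rw [linearIndependent_iff']
  intro s c hc α hαs
  obtain ⟨x, hx⟩ := Function.ne_iff.1 (hne α)
  have hα : ∀ β, β ≠ α → h β x = 0 := fun β hβ =>
    by_contra fun hβx => Set.disjoint_left.1 (hh hβ) hβx hx
  have hcα := sum_smul_apply_of_forall_ne_eq_zero c hαs hα
  rw [hc, Pi.zero_apply, eq_comm, mul_eq_zero] at hcα
  exact hcα.resolve_right hx

end DisjointSupport

namespace WeightedGraph

section

variable {V : Type*} [Fintype V] (W : WeightedGraph V) {A B : Set V} {x y : V} {p : ℝ}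

lemma vwt_nonneg (x : V) : 0 ≤ W.vwt x :=
  Finset.sum_nonneg fun y _ => W.nonneg x y

lemma vwt_pos [Nontrivial V] (x : V) : 0 < W.vwt x := by
  obtain ⟨y, hxy⟩ := W.connected.preconnected.exists_adj_of_nontrivial x
  exact Finset.sum_pos' (fun y _ => W.nonneg x y)
    ⟨y, Finset.mem_univ y, (W.pos_iff_adj x y).2 hxy⟩

lemma swt_pos [Nontrivial V] (hA : A.Nonempty) : 0 < W.swt A :=
  Finset.sum_pos (fun x _ => W.vwt_pos x) (by simpa [Finset.Nonempty] using! hA)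

lemma swt_add_swt_compl (A : Set V) : W.swt A + W.swt Aᶜ = W.swt Set.univ := by
  simp only [swt, Set.mem_compl_iff, Set.mem_univ, Finset.filter_true]
  exact Finset.sum_filter_add_sum_filter_not _ _ _

lemma sum_swt_le_swt {ι : Type*} {s : Finset ι} {A : ι → Set V}
    (hA : (s : Set ι).PairwiseDisjoint A) (hB : ∀ α ∈ s, A α ⊆ B) :
    ∑ α ∈ s, W.swt (A α) ≤ W.swt B := by
  simp only [swt]
  rw [← Finset.sum_biUnion]
  · refine Finset.sum_le_sum_of_subset_of_nonneg ?_ fun x _ _ => W.vwt_nonneg x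
    intro x hx
    simp only [Finset.mem_biUnion, Finset.mem_filter, Finset.mem_univ, true_and] at hx ⊢
    obtain ⟨α, hα, hxα⟩ := hx
    exact hB α hα hxα
  · intro α hα β hβ hαβ
    refine Finset.disjoint_filter.2 fun x _ hxα hxβ => ?_
    exact Set.disjoint_left.1 (hA hα hβ hαβ) hxα hxβ

lemma swt_le_swt_univ_sub_sum {ι : Type*} {s : Finset ι} {A : ι → Set V}
    (hA : (s : Set ι).PairwiseDisjoint A) (hB : ∀ α ∈ s, Disjoint B (A α)) :
    W.swt B ≤ W.swt Set.univ - ∑ α ∈ s, W.swt (A α) := by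
  have hsum := W.sum_swt_le_swt hA fun α hα => (hB α hα).symm.subset_compl_right
  linarith [W.swt_add_swt_compl B]

lemma setDist_le_dist (hx : x ∈ A) (hy : y ∈ B) : W.setDist A B ≤ W.G.dist x y :=
  Nat.sInf_le ⟨x, hx, y, hy, rfl⟩

lemma exists_dist_eq_setDist (hA : A.Nonempty) (hB : B.Nonempty) :
    ∃ x ∈ A, ∃ y ∈ B, W.G.dist x y = W.setDist A B := by
  obtain ⟨x, hx⟩ := hA
  obtain ⟨y, hy⟩ := hB
  exact Nat.sInf_mem (s := {n | ∃ a ∈ A, ∃ b ∈ B, W.G.dist a b = n}) ⟨_, x, hx, y, hy, rfl⟩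

lemma setDist_pos (hA : A.Nonempty) (hB : B.Nonempty) (hAB : Disjoint A B) :
    0 < W.setDist A B := by
  obtain ⟨x, hx, y, hy, hxy⟩ := W.exists_dist_eq_setDist hA hB
  rw [← hxy]
  exact W.connected.pos_dist_of_ne fun h => Set.disjoint_left.1 hAB hx (h ▸ hy)

lemma sInf_setDist_pos {ι : Type*} [Nontrivial ι] {A : ι → Set V} (hne : ∀ α, (A α).Nonempty)
    (hdisj : ∀ α β, α ≠ β → Disjoint (A α) (A β)) :
    0 < sInf {n | ∃ α β, α ≠ β ∧ n = W.setDist (A α) (A β)} := by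
  obtain ⟨α, β, hαβ⟩ := exists_pair_ne ι
  obtain ⟨γ, δ, hγδ, hmin⟩ :=
    Nat.sInf_mem (s := {n | ∃ α β, α ≠ β ∧ n = W.setDist (A α) (A β)}) ⟨_, α, β, hαβ, rfl⟩
  exact hmin ▸ W.setDist_pos (hne γ) (hne δ) (hdisj γ δ hγδ)

lemma exists_dist_eq_setDist_singleton (hA : A.Nonempty) (x : V) :
    ∃ a ∈ A, W.G.dist x a = W.setDist {x} A := by
  obtain ⟨_, rfl, a, ha, hxa⟩ := W.exists_dist_eq_setDist (Set.singleton_nonempty x) hA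
  exact ⟨a, ha, hxa⟩

lemma setDist_singleton_of_mem (hx : x ∈ A) : W.setDist {x} A = 0 :=
  Nat.le_zero.1 <| (W.setDist_le_dist (Set.mem_singleton x) hx).trans_eq SimpleGraph.dist_self

lemma setDist_singleton_le_succ_of_adj (hA : A.Nonempty) (hxy : W.G.Adj x y) :
    W.setDist {x} A ≤ W.setDist {y} A + 1 := by
  obtain ⟨a, ha, hya⟩ := W.exists_dist_eq_setDist_singleton hA y
  calc W.setDist {x} A ≤ W.G.dist x a := W.setDist_le_dist rfl ha
    _ ≤ W.G.dist x y + W.G.dist y a := W.connected.dist_triangle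
    _ = W.setDist {y} A + 1 := by
      rw [hya, SimpleGraph.dist_eq_one_iff_adj.2 hxy, add_comm]

lemma setDist_le_add_dist_add (hA : A.Nonempty) (hB : B.Nonempty) (x y : V) :
    W.setDist A B ≤ W.setDist {x} A + W.G.dist x y + W.setDist {y} B := by
  obtain ⟨a, ha, hxa⟩ := W.exists_dist_eq_setDist_singleton hA x
  obtain ⟨b, hb, hyb⟩ := W.exists_dist_eq_setDist_singleton hB y
  calc W.setDist A B ≤ W.G.dist a b := W.setDist_le_dist ha hb
    _ ≤ W.G.dist a x + W.G.dist x b := W.connected.dist_triangle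
    _ ≤ W.G.dist a x + (W.G.dist x y + W.G.dist y b) := by
      gcongr; exact W.connected.dist_triangle
    _ = _ := by rw [SimpleGraph.dist_comm, hxa, hyb, add_assoc]

lemma mem_ball_iff_setDist_le (hA : A.Nonempty) {r : ℝ} :
    x ∈ W.ball A r ↔ (W.setDist {x} A : ℝ) ≤ r := by
  constructor
  · rintro ⟨a, ha, hxa⟩
    exact le_trans (mod_cast W.setDist_le_dist rfl ha) hxa
  · intro hx
    obtain ⟨a, ha, hxa⟩ := W.exists_dist_eq_setDist_singleton hA x
    exact ⟨a, ha, hxa ▸ hx⟩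

lemma disjoint_ball_of_lt_setDist {r : ℝ} (hr : r < W.setDist A B) : Disjoint (W.ball A r) B := by
  rw [Set.disjoint_left]
  rintro x ⟨a, ha, hxa⟩ hx
  have hdist : (W.setDist A B : ℝ) ≤ W.G.dist x a := by
    rw [SimpleGraph.dist_comm]
    exact_mod_cast W.setDist_le_dist ha hx
  linarith

lemma sum_abs_rpow_mul_vwt_nonneg (p : ℝ) (φ : V → ℝ) : 0 ≤ ∑ x, |φ x| ^ p * W.vwt x :=
  Finset.sum_nonneg fun x _ => mul_nonneg (by positivity) (W.vwt_nonneg x)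

lemma energy_nonneg (p : ℝ) (φ : V → ℝ) : 0 ≤ W.energy p φ :=
  Finset.sum_nonneg fun x _ => Finset.sum_nonneg fun y _ =>
    mul_nonneg (by positivity) (W.nonneg x y)

lemma sSup_rayleigh_nonneg (p : ℝ) (L : Submodule ℝ (V → ℝ)) :
    0 ≤ sSup {r | ∃ φ ∈ L, φ ≠ 0 ∧ r = W.energy p φ / (2 * ∑ x, |φ x| ^ p * W.vwt x)} := by
  apply Real.sSup_nonneg
  rintro r ⟨φ, _, _, rfl⟩
  have := W.energy_nonneg p φ
  have := W.sum_abs_rpow_mul_vwt_nonneg p φ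
  positivity

lemma nuHat_nonneg (k : ℕ) (p : ℝ) : 0 ≤ W.nuHat k p := by
  apply Real.sInf_nonneg
  rintro s ⟨L, _, rfl⟩
  exact W.sSup_rayleigh_nonneg p L

variable {W}

lemma nuHat_le_of_linearIndependent {ι : Type*} [Fintype ι] {k : ℕ} {C : ℝ}
    {h : ι → V → ℝ} (hcard : Fintype.card ι = k + 1) (hh : LinearIndependent ℝ h) (hC : 0 ≤ C)
    (hle : ∀ c : ι → ℝ, W.energy p (∑ α, c α • h α) ≤
      2 * C * ∑ x, |(∑ α, c α • h α) x| ^ p * W.vwt x) :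
    W.nuHat k p ≤ C := by
  have hbdd : BddBelow {s | ∃ L : Submodule ℝ (V → ℝ), Module.finrank ℝ L = k + 1 ∧
      s = sSup {r | ∃ φ ∈ L, φ ≠ 0 ∧
        r = W.energy p φ / (2 * ∑ x, |φ x| ^ p * W.vwt x)}} := by
    refine ⟨0, ?_⟩
    rintro s ⟨L, _, rfl⟩
    exact W.sSup_rayleigh_nonneg p L
  have hspan : Module.finrank ℝ (Submodule.span ℝ (Set.range h)) = k + 1 := by
    rw [finrank_span_eq_card hh, hcard]
  refine (csInf_le hbdd ⟨_, hspan, rfl⟩).trans (Real.sSup_le ?_ hC)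
  rintro r ⟨φ, hφ, _, rfl⟩
  obtain ⟨c, rfl⟩ := (Submodule.mem_span_range_iff_exists_fun ℝ).1 hφ
  apply div_le_of_le_mul₀ (mul_nonneg zero_le_two (W.sum_abs_rpow_mul_vwt_nonneg p _)) hC
  linarith [hle c]

variable (W) in
/-- The function `g` is an upper gradient of `φ`: the increment of `φ` along an edge is at most the
average of `g` over its end points. The average, rather than the sum or the maximum, makes the
`p`-energy of `φ` at most the `p`-norm of `g` without a further factor. -/
def IsUpperGradient (φ g : V → ℝ) : Prop :=
  ∀ ⦃x y⦄, W.G.Adj x y → |φ y - φ x| ≤ (g x + g y) / 2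

lemma IsUpperGradient.abs_sub_rpow_le {φ g : V → ℝ} (hφ : W.IsUpperGradient φ g)
    (hg : ∀ x, 0 ≤ g x) (hp : 1 ≤ p) (hxy : W.G.Adj x y) :
    |φ y - φ x| ^ p ≤ (g x ^ p + g y ^ p) / 2 := by
  have hconv := (convexOn_rpow hp).2 (Set.mem_Ici.2 (hg x)) (Set.mem_Ici.2 (hg y))
    one_half_pos.le one_half_pos.le (add_halves 1)
  simp only [smul_eq_mul] at hconv
  calc |φ y - φ x| ^ p ≤ ((g x + g y) / 2) ^ p := by gcongr; exact hφ hxy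
    _ = (1 / 2 * g x + 1 / 2 * g y) ^ p := by ring_nf
    _ ≤ 1 / 2 * g x ^ p + 1 / 2 * g y ^ p := hconv
    _ = (g x ^ p + g y ^ p) / 2 := by ring

lemma IsUpperGradient.energy_le {φ g : V → ℝ} (hφ : W.IsUpperGradient φ g)
    (hg : ∀ x, 0 ≤ g x) (hp : 1 ≤ p) :
    W.energy p φ ≤ ∑ x, g x ^ p * W.vwt x := by
  have hedge : ∀ x y, |φ y - φ x| ^ p * W.w x y ≤ (g x ^ p + g y ^ p) / 2 * W.w x y := by
    intro x y
    rcases (W.nonneg x y).eq_or_lt with hw | hw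
    · rw [← hw, mul_zero, mul_zero]
    · gcongr
      exact hφ.abs_sub_rpow_le hg hp ((W.pos_iff_adj x y).1 hw)
  have hfst : ∑ x, ∑ y, g x ^ p * W.w x y = ∑ x, g x ^ p * W.vwt x := by
    simp only [vwt, Finset.mul_sum]
  have hsnd : ∑ x, ∑ y, g y ^ p * W.w x y = ∑ x, g x ^ p * W.vwt x := by
    rw [Finset.sum_comm]
    simp only [W.symm _ _, ← hfst]
  calc W.energy p φ ≤ ∑ x, ∑ y, (g x ^ p + g y ^ p) / 2 * W.w x y :=
        Finset.sum_le_sum fun x _ => Finset.sum_le_sum fun y _ => hedge x y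
    _ = (∑ x, ∑ y, g x ^ p * W.w x y + ∑ x, ∑ y, g y ^ p * W.w x y) / 2 := by
        simp only [← Finset.sum_add_distrib, Finset.sum_div, add_mul, add_div, mul_div_right_comm]
    _ = ∑ x, g x ^ p * W.vwt x := by rw [hfst, hsnd, add_self_div_two]

end

section DisjointFamily

variable {V ι : Type*} [Fintype V] [Fintype ι] {W : WeightedGraph V} {p : ℝ} {h g : ι → V → ℝ}

lemma isUpperGradient_sum_smul [Nonempty ι]
    (hh : Pairwise fun α β => Disjoint (h α).support (h β).support)
    (hgrad : ∀ α, W.IsUpperGradient (h α) (g α))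
    (hcross : ∀ ⦃α β x y⦄, α ≠ β → W.G.Adj x y → h α x ≠ 0 → h β y ≠ 0 →
      |h α x| ≤ g α x / 2) (c : ι → ℝ) :
    W.IsUpperGradient (∑ α, c α • h α) fun x => ⨆ α, |c α| * g α x := by
  intro x y hxy
  have hle_iSup : ∀ α z, |c α| * g α z ≤ ⨆ β, |c β| * g β z := fun α z =>
    le_ciSup (f := fun β => |c β| * g β z) (Finite.bddAbove_range _) α
  have hsingle : ∀ α, (∀ β, β ≠ α → h β x = 0) → (∀ β, β ≠ α → h β y = 0) →
      |(∑ α, c α • h α) y - (∑ α, c α • h α) x| ≤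
        ((⨆ α, |c α| * g α x) + ⨆ α, |c α| * g α y) / 2 := by
    intro α hx hy
    rw [sum_smul_apply_of_forall_ne_eq_zero c (Finset.mem_univ α) hx,
      sum_smul_apply_of_forall_ne_eq_zero c (Finset.mem_univ α) hy, ← mul_sub, abs_mul]
    have := mul_le_mul_of_nonneg_left (hgrad α hxy) (abs_nonneg (c α))
    linarith [hle_iSup α x, hle_iSup α y]
  obtain ⟨α, hα⟩ := exists_forall_ne_eq_zero_of_disjoint_support hh x
  obtain ⟨β, hβ⟩ := exists_forall_ne_eq_zero_of_disjoint_support hh y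
  rcases eq_or_ne α β with rfl | hαβ
  · exact hsingle α hα hβ
  by_cases hx : h α x = 0
  · exact hsingle β (fun γ _ => (eq_or_ne γ α).elim (fun e => e ▸ hx) (hα γ)) hβ
  by_cases hy : h β y = 0
  · exact hsingle α hα fun γ _ => (eq_or_ne γ β).elim (fun e => e ▸ hy) (hβ γ)
  rw [sum_smul_apply_of_forall_ne_eq_zero c (Finset.mem_univ α) hα,
    sum_smul_apply_of_forall_ne_eq_zero c (Finset.mem_univ β) hβ]
  have hx_le := mul_le_mul_of_nonneg_left (hcross hαβ hxy hx hy) (abs_nonneg (c α))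
  have hy_le := mul_le_mul_of_nonneg_left (hcross hαβ.symm hxy.symm hy hx) (abs_nonneg (c β))
  have htri := abs_sub (c β * h β y) (c α * h α x)
  rw [abs_mul, abs_mul] at htri
  linarith [hle_iSup α x, hle_iSup β y]

lemma energy_sum_smul_le [Nonempty ι] (hp : 1 ≤ p)
    (hh : Pairwise fun α β => Disjoint (h α).support (h β).support)
    (hgrad : ∀ α, W.IsUpperGradient (h α) (g α)) (hg : ∀ α x, 0 ≤ g α x)
    (hcross : ∀ ⦃α β x y⦄, α ≠ β → W.G.Adj x y → h α x ≠ 0 → h β y ≠ 0 →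
      |h α x| ≤ g α x / 2) (c : ι → ℝ) :
    W.energy p (∑ α, c α • h α) ≤ ∑ α, |c α| ^ p * ∑ x, g α x ^ p * W.vwt x := by
  have hcg : ∀ α x, 0 ≤ |c α| * g α x := fun α x => mul_nonneg (abs_nonneg _) (hg α x)
  calc W.energy p (∑ α, c α • h α)
      ≤ ∑ x, (⨆ α, |c α| * g α x) ^ p * W.vwt x :=
        (isUpperGradient_sum_smul hh hgrad hcross c).energy_le
          (fun x => Real.iSup_nonneg fun α => hcg α x) hp
    _ ≤ ∑ x, (∑ α, (|c α| * g α x) ^ p) * W.vwt x := by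
        gcongr with x
        · exact W.vwt_nonneg x
        · exact iSup_rpow_le_sum_rpow p fun α => hcg α x
    _ = ∑ α, |c α| ^ p * ∑ x, g α x ^ p * W.vwt x := by
        simp only [Real.mul_rpow (abs_nonneg _) (hg _ _), Finset.sum_mul, Finset.mul_sum]
        rw [Finset.sum_comm]
        simp only [mul_assoc]

lemma sum_abs_sum_smul_rpow_mul_vwt
    (hh : Pairwise fun α β => Disjoint (h α).support (h β).support) (hp : p ≠ 0) (c : ι → ℝ) :
    ∑ x, |(∑ α, c α • h α) x| ^ p * W.vwt x =
      ∑ α, |c α| ^ p * ∑ x, |h α x| ^ p * W.vwt x := by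
  simp only [abs_sum_smul_apply_rpow hh hp, Finset.sum_mul, Finset.mul_sum]
  rw [Finset.sum_comm]
  simp only [mul_assoc]

theorem nuHat_le_of_disjoint_support {k : ℕ} {C : ℝ} (hp : 1 ≤ p)
    (hcard : Fintype.card ι = k + 1)
    (hh : Pairwise fun α β => Disjoint (h α).support (h β).support) (hne : ∀ α, h α ≠ 0)
    (hgrad : ∀ α, W.IsUpperGradient (h α) (g α)) (hg : ∀ α x, 0 ≤ g α x)
    (hcross : ∀ ⦃α β x y⦄, α ≠ β → W.G.Adj x y → h α x ≠ 0 → h β y ≠ 0 →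
      |h α x| ≤ g α x / 2) (hC : 0 ≤ C)
    (hle : ∀ α, ∑ x, g α x ^ p * W.vwt x ≤ 2 * C * ∑ x, |h α x| ^ p * W.vwt x) :
    W.nuHat k p ≤ C := by
  have : Nonempty ι := Fintype.card_pos_iff.1 (by omega)
  refine nuHat_le_of_linearIndependent hcard (linearIndependent_of_disjoint_support hh hne) hC
    fun c => ?_
  calc W.energy p (∑ α, c α • h α)
      ≤ ∑ α, |c α| ^ p * ∑ x, g α x ^ p * W.vwt x := energy_sum_smul_le hp hh hgrad hg hcross c
    _ ≤ ∑ α, |c α| ^ p * (2 * C * ∑ x, |h α x| ^ p * W.vwt x) := by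
        gcongr with α
        exact hle α
    _ = 2 * C * ∑ x, |(∑ α, c α • h α) x| ^ p * W.vwt x := by
        rw [sum_abs_sum_smul_rpow_mul_vwt hh (zero_lt_one.trans_le hp).ne']
        simp only [Finset.mul_sum, mul_left_comm]

end DisjointFamily

section RadialTest

variable {V : Type*} [Fintype V]

/-- The truncated exponential of `a` times the graph distance to `A`, which serves as test function
around `A`. -/
def radialTest (W : WeightedGraph V) (a S : ℝ) (A : Set V) (x : V) : ℝ :=
  truncExp S (a * W.setDist {x} A)

/-- The upper gradient of `radialTest W a S A` given by the slope of the profile. -/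
def radialSlope (W : WeightedGraph V) (a S : ℝ) (A : Set V) (x : V) : ℝ :=
  a * truncExpSlope S (a * W.setDist {x} A)

variable {W : WeightedGraph V} {a S p : ℝ} {D : ℕ} {A B : Set V} {x y : V}

lemma radialSlope_nonneg (ha : 0 ≤ a) (x : V) : 0 ≤ W.radialSlope a S A x :=
  mul_nonneg ha (truncExpSlope_nonneg _ _)

lemma radialTest_of_mem (hS : 0 ≤ S) (hx : x ∈ A) : W.radialTest a S A x = 1 := by
  rw [radialTest, W.setDist_singleton_of_mem hx, Nat.cast_zero, mul_zero, truncExp_zero hS]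

lemma radialTest_ne_zero (hS : 0 ≤ S) (hA : A.Nonempty) : W.radialTest a S A ≠ 0 := by
  obtain ⟨x, hx⟩ := hA
  exact Function.ne_iff.2 ⟨x, by rw [radialTest_of_mem hS hx]; exact one_ne_zero⟩

lemma two_mul_setDist_lt_of_radialTest_ne_zero (ha : 0 < a) (hS : S + 1 = a * (D / 2))
    (hx : W.radialTest a S A x ≠ 0) : 2 * W.setDist {x} A < D := by
  by_contra! hle
  refine hx (truncExp_eq_zero ?_)
  rw [hS]
  have : (D : ℝ) ≤ 2 * W.setDist {x} A := mod_cast hle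
  gcongr
  linarith

lemma disjoint_support_radialTest (ha : 0 < a) (hS : S + 1 = a * (D / 2)) (hA : A.Nonempty)
    (hB : B.Nonempty) (hAB : D ≤ W.setDist A B) :
    Disjoint (W.radialTest a S A).support (W.radialTest a S B).support := by
  refine Set.disjoint_left.2 fun x hxA hxB => ?_
  have hltA := two_mul_setDist_lt_of_radialTest_ne_zero ha hS hxA
  have hltB := two_mul_setDist_lt_of_radialTest_ne_zero ha hS hxB
  have htri := W.setDist_le_add_dist_add hA hB x x
  rw [SimpleGraph.dist_self] at htri
  omega

lemma isUpperGradient_radialSlope (ha : 0 < a) (hS : S + 1 = a * (D / 2)) (hA : A.Nonempty) :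
    W.IsUpperGradient (W.radialTest a S A) (W.radialSlope a S A) := fun _ _ hxy =>
  abs_truncExp_sub_le ha hS (W.setDist_singleton_le_succ_of_adj hA hxy)
    (W.setDist_singleton_le_succ_of_adj hA hxy.symm)

/- If an edge joins the supports around `A` and `B`, both of its ends have distance exactly
`(D - 1) / 2` to the respective set. -/
lemma abs_radialTest_le_half_radialSlope (ha : 0 < a) (hS : S + 1 = a * (D / 2))
    (hA : A.Nonempty) (hB : B.Nonempty) (hAB : D ≤ W.setDist A B) (hxy : W.G.Adj x y)
    (hy : W.radialTest a S B y ≠ 0) :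
    |W.radialTest a S A x| ≤ W.radialSlope a S A x / 2 := by
  have hlt := two_mul_setDist_lt_of_radialTest_ne_zero ha hS hy
  have htri := W.setDist_le_add_dist_add hA hB x y
  rw [SimpleGraph.dist_eq_one_iff_adj.2 hxy] at htri
  have hD : (D : ℝ) ≤ 2 * W.setDist {x} A + 1 :=
    mod_cast (by omega : D ≤ 2 * W.setDist {x} A + 1)
  rw [radialTest, radialSlope, abs_of_nonneg (truncExp_nonneg _ _), mul_div_right_comm]
  refine truncExp_le_mul_truncExpSlope (half_pos ha).le ?_
  rw [hS]
  nlinarith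

lemma swt_le_sum_abs_radialTest_rpow (hS : 0 ≤ S) :
    W.swt A ≤ ∑ x, |W.radialTest a S A x| ^ p * W.vwt x := by
  rw [swt, Finset.sum_filter]
  refine Finset.sum_le_sum fun x _ => ?_
  split_ifs with hx
  · rw [radialTest_of_mem hS hx, abs_one, Real.one_rpow, one_mul]
  · exact mul_nonneg (by positivity) (W.vwt_nonneg x)

lemma radialSlope_rpow_le (ha : 0 < a) (hp : p ≠ 0) (hS : S + 1 = a * (D / 2)) (hA : A.Nonempty)
    (x : V) :
    W.radialSlope a S A x ^ p ≤ a ^ p * (|W.radialTest a S A x| ^ p +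
      if x ∈ W.ball A (D / 2) then Real.exp (-S) ^ p else 0) := by
  have hball : x ∈ W.ball A (D / 2) ↔ a * (W.setDist {x} A : ℝ) ≤ S + 1 := by
    rw [W.mem_ball_iff_setDist_le hA, hS, mul_le_mul_iff_right₀ ha]
  rw [radialSlope, radialTest, abs_of_nonneg (truncExp_nonneg _ _),
    Real.mul_rpow ha.le (truncExpSlope_nonneg _ _)]
  simp only [hball]
  gcongr
  exact truncExpSlope_rpow_le hp S _

lemma sum_radialSlope_rpow_le (ha : 0 < a) (hp : 1 ≤ p) (hS₀ : 0 ≤ S) (hS : S + 1 = a * (D / 2))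
    (hA : A.Nonempty) (hvol : W.swt (W.ball A (D / 2)) ≤ Real.exp S * W.swt A) :
    ∑ x, W.radialSlope a S A x ^ p * W.vwt x ≤
      2 * a ^ p * ∑ x, |W.radialTest a S A x| ^ p * W.vwt x := by
  set norm := ∑ x, |W.radialTest a S A x| ^ p * W.vwt x
  have hexp : Real.exp (-S) ^ p ≤ Real.exp (-S) :=
    Real.rpow_le_self_of_le_one (Real.exp_nonneg _) (Real.exp_le_one_iff.2 (neg_nonpos.2 hS₀)) hp
  have hball : Real.exp (-S) ^ p * W.swt (W.ball A (D / 2)) ≤ norm :=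
    calc Real.exp (-S) ^ p * W.swt (W.ball A (D / 2))
        ≤ Real.exp (-S) * (Real.exp S * W.swt A) :=
          mul_le_mul hexp hvol (Finset.sum_nonneg fun x _ => W.vwt_nonneg x) (Real.exp_nonneg _)
      _ = W.swt A := by rw [← mul_assoc, ← Real.exp_add, neg_add_cancel, Real.exp_zero, one_mul]
      _ ≤ norm := swt_le_sum_abs_radialTest_rpow hS₀
  calc ∑ x, W.radialSlope a S A x ^ p * W.vwt x
      ≤ ∑ x, a ^ p * (|W.radialTest a S A x| ^ p +
          if x ∈ W.ball A (D / 2) then Real.exp (-S) ^ p else 0) * W.vwt x := by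
        gcongr with x
        · exact W.vwt_nonneg x
        · exact radialSlope_rpow_le ha (zero_lt_one.trans_le hp).ne' hS hA x
    _ = a ^ p * (norm + Real.exp (-S) ^ p * W.swt (W.ball A (D / 2))) := by
        simp only [norm, swt, Finset.sum_filter, mul_assoc, add_mul, ite_mul, zero_mul,
          Finset.mul_sum, mul_add, Finset.sum_add_distrib, mul_ite, mul_zero]
    _ ≤ a ^ p * (norm + norm) := by gcongr
    _ = 2 * a ^ p * norm := by ring

theorem nuHat_le_of_swt_ball_le {ι : Type*} [Fintype ι] {k : ℕ} {A : ι → Set V} (hp : 1 ≤ p)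
    (hcard : Fintype.card ι = k + 1) (hne : ∀ α, (A α).Nonempty) (hD : 0 < D) (hS : 0 ≤ S)
    (hsep : ∀ α β, α ≠ β → D ≤ W.setDist (A α) (A β))
    (hvol : ∀ α, W.swt (W.ball (A α) (D / 2)) ≤ Real.exp S * W.swt (A α)) :
    W.nuHat k p ≤ (2 / D * (S + 1)) ^ p := by
  set a : ℝ := 2 / D * (S + 1)
  have ha : 0 < a := by positivity
  have haD : S + 1 = a * (D / 2) := by simp only [a]; field_simp
  exact nuHat_le_of_disjoint_support hp hcard
    (fun α β hαβ => disjoint_support_radialTest ha haD (hne α) (hne β) (hsep α β hαβ))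
    (fun α => radialTest_ne_zero hS (hne α))
    (fun α => isUpperGradient_radialSlope ha haD (hne α))
    (fun α => radialSlope_nonneg ha.le)
    (fun α β _ _ hαβ hxy _ hy =>
      abs_radialTest_le_half_radialSlope ha haD (hne α) (hne β) (hsep α β hαβ) hxy hy)
    (by positivity)
    (fun α => sum_radialSlope_rpow_le ha hp hS haD (hne α) (hvol α))

end RadialTest

end WeightedGraph

lemma one_le_log_exp_one_mul_div {m N : ℝ} (hm : 0 < m) (hmN : m ≤ N) :
    1 ≤ Real.log (Real.exp 1 * N / m) := by
  rw [Real.le_log_iff_exp_le (by have := hm.trans_le hmN; positivity), le_div_iff₀ hm]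
  gcongr

lemma le_exp_mul_of_log_exp_one_mul_div_le {m N M : ℝ} (hm : 0 < m) (hN : 0 < N)
    (hM : Real.log (Real.exp 1 * N / m) ≤ M) : N ≤ Real.exp (M - 1) * m := by
  rw [Real.log_le_iff_le_exp (by positivity), div_le_iff₀ hm] at hM
  rw [Real.exp_sub, div_mul_eq_mul_div, le_div_iff₀ (Real.exp_pos 1)]
  linarith

open WeightedGraph in
/-- Discrete analogue of Theorem 3.1: for nonempty pairwise disjoint subsets
`A_0, …, A_k ⊆ V`, with `D := min_{α ≠ β} d(A_α, A_β)`,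
`ν̂_{k,p}(G,μ)^{1/p} ≤ (2/D) max_α log(e (μ(V) - ∑_{β ≠ α} μ(A_β)) / μ(A_α))`. -/
theorem nuHat_rpow_le_of_separated_sets
    {V : Type*} [Fintype V] (W : WeightedGraph V) (p : ℝ) (hp : 1 ≤ p)
    (k : ℕ) (hk₁ : 1 ≤ k) (hk₂ : k ≤ Fintype.card V - 1)
    (A : Fin (k + 1) → Set V) (hne : ∀ α, (A α).Nonempty)
    (hdisj : ∀ α β, α ≠ β → Disjoint (A α) (A β))
    (D : ℕ) (hD : D = sInf {n : ℕ | ∃ α β, α ≠ β ∧ n = W.setDist (A α) (A β)}) :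
    W.nuHat k p ^ (1 / p) ≤
      (2 / (D : ℝ)) * ⨆ α, Real.log
        (Real.exp 1 * (W.swt Set.univ - ∑ β ∈ Finset.univ.erase α, W.swt (A β)) /
          W.swt (A α)) := by
  have hsep : ∀ α β, α ≠ β → D ≤ W.setDist (A α) (A β) := fun α β hαβ =>
    hD ▸ Nat.sInf_le ⟨α, β, hαβ, rfl⟩
  have : Nontrivial (Fin (k + 1)) := Fin.nontrivial_iff_two_le.2 (by omega)
  have hDpos : 0 < D := hD ▸ W.sInf_setDist_pos hne hdisj
  have : Nontrivial V := Fintype.one_lt_card_iff_nontrivial.1 (by omega)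
  set N := fun α => W.swt Set.univ - ∑ β ∈ Finset.univ.erase α, W.swt (A β)
  have hN : ∀ α B, (∀ β, β ≠ α → Disjoint B (A β)) → W.swt B ≤ N α := fun α B hB =>
    W.swt_le_swt_univ_sub_sum (fun β _ γ _ => hdisj β γ) fun β hβ =>
      hB β (Finset.ne_of_mem_erase hβ)
  have hA : ∀ α, 0 < W.swt (A α) := fun α => W.swt_pos (hne α)
  have hAN : ∀ α, W.swt (A α) ≤ N α := fun α => hN α (A α) fun β hβ => hdisj α β hβ.symm
  set M := ⨆ α, Real.log (Real.exp 1 * N α / W.swt (A α))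
  have hM : ∀ α, Real.log (Real.exp 1 * N α / W.swt (A α)) ≤ M :=
    le_ciSup (f := fun α => Real.log (Real.exp 1 * N α / W.swt (A α))) (Finite.bddAbove_range _)
  have hM₁ : 1 ≤ M := (one_le_log_exp_one_mul_div (hA 0) (hAN 0)).trans (hM 0)
  have hball : ∀ α, W.swt (W.ball (A α) (D / 2)) ≤ N α := fun α =>
    hN α _ fun β hβ => W.disjoint_ball_of_lt_setDist <|
      (half_lt_self (Nat.cast_pos.2 hDpos)).trans_le (mod_cast hsep α β hβ.symm)
  have hnu : W.nuHat k p ≤ (2 / D * (M - 1 + 1)) ^ p :=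
    nuHat_le_of_swt_ball_le hp (Fintype.card_fin _) hne hDpos (sub_nonneg.2 hM₁) hsep fun α =>
      (hball α).trans <|
        le_exp_mul_of_log_exp_one_mul_div_le (hA α) ((hA α).trans_le (hAN α)) (hM α)
  rw [sub_add_cancel] at hnu
  rw [one_div]
  exact (Real.rpow_inv_le_iff_of_pos (W.nuHat_nonneg k p) (by positivity) (by linarith)).2 hnu
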